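/- Let N ≥ M ≥ 1 and 1 ≤ m ≤ M be integers and b > 0. Define, for ρ > 0, G(ρ) = ∫_{ {0 < λ_1 ≤ … ≤ λ_M, λ_k ≤ b/ρ for k = 1,…,m} } ∏_{i=1}^M λ_i^{N−M} e^{−λ_i} ∏_{1≤i<j≤M} (λ_i − λ_j)² dλ_1 ⋯ dλ_M. Then limsup_{ρ→∞} log G(ρ)/log ρ ≤ −m(N−M+m). -/

import Mathlib

/-!
The proof reduces to two-sided power bounds, as `c = b / ρ → 0`, for the integral `I(c)` of the
weight over the truncated chamber `0 < x₁ ≤ … ≤ x_M`, `x_k ≤ c` for `k ≤ m`.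

*Upper bound.* On the chamber `0 ≤ x_j - x_i ≤ x_j` for `i < j`, so (with zero-based indices) the
squared Vandermonde factor is at most `∏_j x_j ^ (2j)`. The weight is therefore dominated by the
product `∏_j x_j ^ (N - M + 2j) e^{-x_j}`, and the chamber lies in a box, so the integral
factorizes. The coordinates `j ≥ m` contribute Gamma integrals and each coordinate `j < m`
contributes at most `c ^ (N - M + 2j + 1)`; since `∑_{j < m} (N - M + 2j + 1) = m (N - M + m)`, the
result is `I(c) ≤ C c ^ (m (N - M + m))`.

*Lower bound.* The real-valued `limsup` is only meaningful when the function does not tend to `-∞`,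
and `log` only when `I(c) > 0`; so a crude bound `I(c) ≥ C c ^ K` is needed too. It comes from the
box `∏_i [(2i+1)t, (2i+2)t]` with `t = c / (2M)`, on which all coordinates and all gaps are at
least `t`.
-/

open MeasureTheory

/-- The (unnormalized) joint density of the ordered eigenvalues of an `M × M` complex
Wishart matrix with `N` degrees of freedom:
`w(λ) = ∏_i λ_i^{N-M} e^{-λ_i} ∏_{i<j} (λ_i - λ_j)²`. -/
noncomputable def wishartWeight (N M : ℕ) (x : Fin M → ℝ) : ℝ :=
  (∏ i : Fin M, x i ^ (N - M) * Real.exp (-x i)) *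
    ∏ i : Fin M, ∏ j ∈ Finset.Ioi i, (x i - x j) ^ 2

open Filter

/-- The ordered positive chamber in `ℝ^M`, truncated by requiring the `m` smallest coordinates to
be at most `c`. -/
def truncChamber (M m : ℕ) (c : ℝ) : Set (Fin M → ℝ) :=
  {x : Fin M → ℝ | (∀ i, 0 < x i) ∧ Monotone x ∧ ∀ k : Fin M, (k : ℕ) < m → x k ≤ c}

/-- The one-variable factor dominating the `j`-th coordinate of the weight on the truncated
chamber: `y ^ (n + 2j) e^{-y}`, supported on `(0, c]` if `j < m` and on `(0, ∞)` otherwise. -/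
noncomputable def chamberFactor (n m : ℕ) (c : ℝ) (j : ℕ) : ℝ → ℝ :=
  (if j < m then Set.Ioc 0 c else Set.Ioi 0).indicator
    fun y => y ^ (n + 2 * j) * Real.exp (-y)

lemma measurableSet_truncChamber (M m : ℕ) (c : ℝ) : MeasurableSet (truncChamber M m c) := by
  have h1 : MeasurableSet {x : Fin M → ℝ | ∀ i, 0 < x i} := by
    rw [Set.ofPred_forall]
    exact MeasurableSet.iInter fun i => measurableSet_lt measurable_const (measurable_pi_apply i)
  have h2 : MeasurableSet {x : Fin M → ℝ | Monotone x} := isClosed_monotone.measurableSet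
  have h3 : MeasurableSet {x : Fin M → ℝ | ∀ k : Fin M, (k : ℕ) < m → x k ≤ c} := by
    simp only [Set.ofPred_forall]
    exact MeasurableSet.iInter fun i => MeasurableSet.iInter fun _ =>
      measurableSet_le (measurable_pi_apply i) measurable_const
  exact h1.inter (h2.inter h3)

lemma continuous_wishartWeight (N M : ℕ) : Continuous (wishartWeight N M) := by
  unfold wishartWeight
  fun_prop

lemma wishartWeight_nonneg {N M : ℕ} {x : Fin M → ℝ} (hx : ∀ i, 0 < x i) :
    0 ≤ wishartWeight N M x := by
  unfold wishartWeight
  refine mul_nonneg (Finset.prod_nonneg fun i _ => ?_)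
    (Finset.prod_nonneg fun i _ => Finset.prod_nonneg fun j _ => sq_nonneg _)
  have := hx i
  positivity

/-- On the ordered chamber each factor `(x i - x j) ^ 2` with `i < j` is at most `x j ^ 2`, and
there are `j` such factors for each `j`. -/
lemma wishartWeight_le {N M : ℕ} {x : Fin M → ℝ} (hx : ∀ i, 0 < x i) (hmono : Monotone x) :
    wishartWeight N M x ≤ ∏ j : Fin M, x j ^ (N - M + 2 * (j : ℕ)) * Real.exp (-x j) := by
  have h : ∏ i : Fin M, ∏ j ∈ Finset.Ioi i, (x i - x j) ^ 2
      ≤ ∏ j : Fin M, x j ^ (2 * (j : ℕ)) := by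
    calc ∏ i : Fin M, ∏ j ∈ Finset.Ioi i, (x i - x j) ^ 2
        ≤ ∏ i : Fin M, ∏ j ∈ Finset.Ioi i, x j ^ 2 := by
          refine Finset.prod_le_prod
            (fun i _ => Finset.prod_nonneg fun j _ => sq_nonneg _) fun i _ => ?_
          refine Finset.prod_le_prod (fun j _ => sq_nonneg _) fun j hj => ?_
          have h1 := hmono (Finset.mem_Ioi.1 hj).le
          have h2 := hx i
          nlinarith
      _ = ∏ j : Fin M, ∏ i ∈ Finset.Iio j, x j ^ 2 := by
          refine Finset.prod_comm' fun i j => ?_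
          simp
      _ = ∏ j : Fin M, x j ^ (2 * (j : ℕ)) := by
          refine Finset.prod_congr rfl fun j _ => ?_
          rw [Finset.prod_const, Fin.card_Iio, ← pow_mul]
  unfold wishartWeight
  calc _ ≤ (∏ i : Fin M, x i ^ (N - M) * Real.exp (-x i)) * ∏ j : Fin M, x j ^ (2 * (j : ℕ)) := by
        refine mul_le_mul_of_nonneg_left h (Finset.prod_nonneg fun i _ => ?_)
        have := hx i
        positivity
    _ = _ := by
        rw [← Finset.prod_mul_distrib]
        refine Finset.prod_congr rfl fun j _ => ?_
        ring

lemma integrableOn_pow_mul_exp_neg (k : ℕ) :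
    IntegrableOn (fun y : ℝ => y ^ k * Real.exp (-y)) (Set.Ioi 0) := by
  have h := Real.GammaIntegral_convergent (s := (k : ℝ) + 1) (by positivity)
  refine h.congr_fun (fun y _ => ?_) measurableSet_Ioi
  simp [mul_comm]

lemma chamberFactor_nonneg (n m : ℕ) (c : ℝ) (j : ℕ) (y : ℝ) : 0 ≤ chamberFactor n m c j y := by
  refine Set.indicator_nonneg (fun y hy => ?_) y
  have : 0 < y := by
    split_ifs at hy
    · exact hy.1
    · exact hy
  positivity

lemma integrable_chamberFactor (n m : ℕ) (c : ℝ) (j : ℕ) :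
    Integrable (chamberFactor n m c j) := by
  unfold chamberFactor
  split_ifs
  · rw [integrable_indicator_iff measurableSet_Ioc]
    exact (integrableOn_pow_mul_exp_neg _).mono_set fun y hy => hy.1
  · rw [integrable_indicator_iff measurableSet_Ioi]
    exact integrableOn_pow_mul_exp_neg _

lemma indicator_wishartWeight_le (N M m : ℕ) (c : ℝ) (x : Fin M → ℝ) :
    (truncChamber M m c).indicator (wishartWeight N M) x
      ≤ ∏ j : Fin M, chamberFactor (N - M) m c j (x j) := by
  by_cases hx : x ∈ truncChamber M m c
  · rw [Set.indicator_of_mem hx]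
    refine (wishartWeight_le hx.1 hx.2.1).trans (le_of_eq ?_)
    refine Finset.prod_congr rfl fun j _ => ?_
    unfold chamberFactor
    rw [Set.indicator_of_mem]
    split_ifs with hj
    · exact ⟨hx.1 j, hx.2.2 j hj⟩
    · exact hx.1 j
  · rw [Set.indicator_of_notMem hx]
    exact Finset.prod_nonneg fun j _ => chamberFactor_nonneg _ _ _ _ _

lemma integrable_prod_chamberFactor (n M m : ℕ) (c : ℝ) :
    Integrable fun x : Fin M → ℝ => ∏ j : Fin M, chamberFactor n m c j (x j) :=
  Integrable.fintype_prod fun j => integrable_chamberFactor n m c j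

lemma integrableOn_wishartWeight (N M m : ℕ) (c : ℝ) :
    IntegrableOn (wishartWeight N M) (truncChamber M m c) := by
  rw [← integrable_indicator_iff (measurableSet_truncChamber M m c)]
  refine (integrable_prod_chamberFactor (N - M) M m c).mono'
    ((continuous_wishartWeight N M).measurable.indicator
      (measurableSet_truncChamber M m c)).aestronglyMeasurable (ae_of_all _ fun x => ?_)
  rw [Real.norm_of_nonneg (Set.indicator_nonneg (fun x hx => wishartWeight_nonneg hx.1) x)]
  exact indicator_wishartWeight_le N M m c x

lemma integral_chamberFactor_of_lt {n m : ℕ} {c : ℝ} (hc : 0 < c) {j : ℕ} (hj : j < m) :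
    ∫ y, chamberFactor n m c j y ≤ c ^ (n + 2 * j + 1) := by
  unfold chamberFactor
  rw [if_pos hj, integral_indicator measurableSet_Ioc]
  have h : ∀ y ∈ Set.Ioc 0 c, y ^ (n + 2 * j) * Real.exp (-y) ≤ c ^ (n + 2 * j) := by
    intro y hy
    have h1 : Real.exp (-y) ≤ 1 := Real.exp_le_one_iff.2 (by linarith [hy.1])
    have h2 : y ^ (n + 2 * j) ≤ c ^ (n + 2 * j) := pow_le_pow_left₀ hy.1.le hy.2 _
    calc _ ≤ c ^ (n + 2 * j) * 1 :=
          mul_le_mul h2 h1 (Real.exp_pos _).le (by positivity)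
      _ = _ := mul_one _
  calc _ ≤ ∫ _ in Set.Ioc 0 c, c ^ (n + 2 * j) :=
        setIntegral_mono_on ((integrableOn_pow_mul_exp_neg _).mono_set fun y hy => hy.1)
          (by simp) measurableSet_Ioc h
    _ = _ := by
        simp [hc.le]
        ring

lemma integral_chamberFactor_of_not_lt {n m : ℕ} {c : ℝ} {j : ℕ} (hj : ¬ j < m) :
    ∫ y, chamberFactor n m c j y = Real.Gamma (n + 2 * j + 1) := by
  unfold chamberFactor
  rw [if_neg hj, integral_indicator measurableSet_Ioi, Real.Gamma_eq_integral (by positivity)]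
  refine setIntegral_congr_fun measurableSet_Ioi fun y _ => ?_
  have h : (n : ℝ) + 2 * j + 1 - 1 = ((n + 2 * j : ℕ) : ℝ) := by push_cast; ring
  simp only [h, Real.rpow_natCast]
  ring

lemma sum_exponents (n M m : ℕ) (hmM : m ≤ M) :
    ∑ j : Fin M, (if (j : ℕ) < m then n + 2 * (j : ℕ) + 1 else 0) = m * (n + m) := by
  rw [Fin.sum_univ_eq_sum_range (fun j => if j < m then n + 2 * j + 1 else 0) M,
    ← Finset.sum_filter]
  have h : (Finset.range M).filter (· < m) = Finset.range m := by
    ext j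
    simp only [Finset.mem_filter, Finset.mem_range]
    omega
  rw [h]
  clear h hmM
  induction m with
  | zero => simp
  | succ k ih =>
    rw [Finset.sum_range_succ, ih]
    ring

lemma setIntegral_wishartWeight_le (N M m : ℕ) (hmM : m ≤ M) :
    ∃ C : ℝ, ∀ c : ℝ, 0 < c →
      ∫ x in truncChamber M m c, wishartWeight N M x ≤ C * c ^ (m * (N - M + m)) := by
  refine ⟨∏ j : Fin M, if (j : ℕ) < m then 1 else
    Real.Gamma ((N - M : ℕ) + 2 * (j : ℕ) + 1), fun c hc => ?_⟩
  calc ∫ x in truncChamber M m c, wishartWeight N M x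
      = ∫ x, (truncChamber M m c).indicator (wishartWeight N M) x :=
        (integral_indicator (measurableSet_truncChamber M m c)).symm
    _ ≤ ∫ x : Fin M → ℝ, ∏ j : Fin M, chamberFactor (N - M) m c j (x j) :=
        integral_mono ((integrable_indicator_iff (measurableSet_truncChamber M m c)).2
          (integrableOn_wishartWeight N M m c)) (integrable_prod_chamberFactor (N - M) M m c)
          (indicator_wishartWeight_le N M m c)
    _ = ∏ j : Fin M, ∫ y, chamberFactor (N - M) m c j y :=
        integral_fintype_prod_volume_eq_prod (fun j : Fin M => chamberFactor (N - M) m c j)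
    _ ≤ ∏ j : Fin M, (if (j : ℕ) < m then 1 else
          Real.Gamma ((N - M : ℕ) + 2 * (j : ℕ) + 1)) *
          c ^ (if (j : ℕ) < m then N - M + 2 * (j : ℕ) + 1 else 0) := by
        refine Finset.prod_le_prod
          (fun j _ => integral_nonneg (chamberFactor_nonneg _ _ _ _)) fun j _ => ?_
        split_ifs with hj
        · rw [one_mul]
          exact integral_chamberFactor_of_lt hc hj
        · rw [pow_zero, mul_one]
          exact (integral_chamberFactor_of_not_lt hj).le
    _ = _ := by
        rw [Finset.prod_mul_distrib, Finset.prod_pow_eq_pow_sum, sum_exponents _ _ _ hmM]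

/-- A crude power lower bound; its exponent is not sharp, but it keeps `log G / log ρ` bounded
below. -/
lemma le_setIntegral_wishartWeight (N M m : ℕ) (hM : 1 ≤ M) :
    ∃ C : ℝ, 0 < C ∧ ∃ K : ℕ, ∀ c : ℝ, 0 < c → c ≤ 1 →
      C * c ^ K ≤ ∫ x in truncChamber M m c, wishartWeight N M x := by
  have hM0 : (0 : ℝ) < M := by exact_mod_cast hM
  set L : ℕ := ∑ i : Fin M, ∑ _j ∈ Finset.Ioi i, 2 with hL
  refine ⟨Real.exp (-1) ^ M * (1 / (2 * M)) ^ ((N - M) * M + L + M), by positivity,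
    (N - M) * M + L + M, fun c hc hc1 => ?_⟩
  set t : ℝ := c / (2 * M) with ht
  have ht0 : 0 < t := by positivity
  have htc : 2 * M * t = c := by rw [ht]; field_simp
  set B : Set (Fin M → ℝ) :=
    Set.Icc (fun i => (2 * (i : ℕ) + 1) * t) (fun i => (2 * (i : ℕ) + 2) * t) with hB
  have hlow : ∀ x ∈ B, ∀ i, t ≤ x i := fun x hx i => by
    have h1 : (2 * (i : ℕ) + 1) * t ≤ x i := hx.1 i
    have h2 : (0 : ℝ) ≤ (i : ℕ) * t := by positivity
    linarith
  have hup : ∀ x ∈ B, ∀ i, x i ≤ c := fun x hx i => by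
    have h1 : x i ≤ (2 * (i : ℕ) + 2) * t := hx.2 i
    have h2 : ((i : ℕ) : ℝ) + 1 ≤ M := by exact_mod_cast i.2
    nlinarith
  have hgap : ∀ x ∈ B, ∀ i j, i < j → x i + t ≤ x j := fun x hx i j hij => by
    have h1 : x i ≤ (2 * (i : ℕ) + 2) * t := hx.2 i
    have h2 : (2 * (j : ℕ) + 1) * t ≤ x j := hx.1 j
    have h3 : ((i : ℕ) : ℝ) + 1 ≤ (j : ℕ) := by exact_mod_cast hij
    nlinarith
  have hsub : B ⊆ truncChamber M m c := fun x hx =>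
    ⟨fun i => ht0.trans_le (hlow x hx i),
      monotone_iff_forall_lt.2 fun i j hij => by linarith [hgap x hx i j hij],
      fun k _ => hup x hx k⟩
  have hBm : MeasurableSet B := measurableSet_Icc
  have hvol : volume.real B = t ^ M := by
    rw [hB, Measure.real, Real.volume_Icc_pi_toReal]
    · rw [← Fin.prod_const]
      refine Finset.prod_congr rfl fun i _ => ?_
      ring
    · intro i
      nlinarith
  have hw : ∀ x ∈ B, Real.exp (-1) ^ M * t ^ ((N - M) * M + L) ≤ wishartWeight N M x := by
    intro x hx
    have h1 : ∏ _i : Fin M, t ^ (N - M) * Real.exp (-1)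
        ≤ ∏ i : Fin M, x i ^ (N - M) * Real.exp (-x i) := by
      refine Finset.prod_le_prod (fun i _ => by positivity) fun i _ => ?_
      refine mul_le_mul (pow_le_pow_left₀ ht0.le (hlow x hx i) _) ?_ (Real.exp_pos _).le ?_
      · exact Real.exp_le_exp.2 (by linarith [hup x hx i])
      · have := ht0.trans_le (hlow x hx i)
        positivity
    have h2 : ∏ i : Fin M, ∏ _j ∈ Finset.Ioi i, t ^ 2
        ≤ ∏ i : Fin M, ∏ j ∈ Finset.Ioi i, (x i - x j) ^ 2 := by
      refine Finset.prod_le_prod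
        (fun i _ => Finset.prod_nonneg fun j _ => sq_nonneg _) fun i _ => ?_
      refine Finset.prod_le_prod (fun j _ => sq_nonneg _) fun j hj => ?_
      have := hgap x hx i j (Finset.mem_Ioi.1 hj)
      nlinarith
    have h3 : ∏ i : Fin M, ∏ _j ∈ Finset.Ioi i, t ^ 2 = t ^ L := by
      simp only [Finset.prod_pow_eq_pow_sum, hL]
    rw [h3] at h2
    rw [Fin.prod_const] at h1
    calc _ = (t ^ (N - M) * Real.exp (-1)) ^ M * t ^ L := by ring
      _ ≤ _ := mul_le_mul h1 h2 (by positivity)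
          ((by positivity : (0 : ℝ) ≤ (t ^ (N - M) * Real.exp (-1)) ^ M).trans h1)
  have hint := integrableOn_wishartWeight N M m c
  calc Real.exp (-1) ^ M * (1 / (2 * M)) ^ ((N - M) * M + L + M) * c ^ ((N - M) * M + L + M)
      = Real.exp (-1) ^ M * t ^ ((N - M) * M + L) * volume.real B := by
        rw [hvol, mul_assoc, ← mul_pow, mul_assoc, ← pow_add, ht, one_div_mul_eq_div]
    _ ≤ ∫ x in B, wishartWeight N M x :=
        setIntegral_ge_of_const_le_real hBm (isCompact_Icc.measure_lt_top.ne) hw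
          (hint.mono_set hsub)
    _ ≤ _ := by
        refine setIntegral_mono_set hint ?_ (ae_of_all _ hsub)
        filter_upwards [ae_restrict_mem (measurableSet_truncChamber M m c)] with x hx
        exact wishartWeight_nonneg hx.1

/-- The limit of `log (C (b / ρ) ^ k) / log ρ`. -/
lemma tendsto_log_power_div_log {C b : ℝ} (hC : 0 < C) (hb : 0 < b) (k : ℕ) :
    Tendsto (fun ρ : ℝ => Real.log (C * (b / ρ) ^ k) / Real.log ρ) atTop (nhds (-(k : ℝ))) := by
  have h : Tendsto (fun ρ : ℝ => (Real.log C + k * Real.log b) / Real.log ρ - k) atTop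
      (nhds (0 - k)) :=
    (Real.tendsto_log_atTop.const_div_atTop _).sub_const _
  rw [zero_sub] at h
  refine h.congr' ?_
  filter_upwards [eventually_gt_atTop 1] with ρ hρ
  have h0 : 0 < ρ := by linarith
  have hl : Real.log ρ ≠ 0 := (Real.log_pos hρ).ne'
  rw [Real.log_mul hC.ne' (by positivity), Real.log_pow, Real.log_div hb.ne' h0.ne']
  field_simp
  ring

/-- **Asymptotic upper bound for the Wishart eigenvalue integral.**  For
`G(ρ) = ∫_{0 < λ_1 ≤ … ≤ λ_M, λ_k ≤ b/ρ for k ≤ m} w(λ) dλ` one has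
`limsup_{ρ→∞} log G(ρ)/log ρ ≤ -m(N-M+m)`. -/
theorem wishart_integral_limsup
    (N M m : ℕ) (hM : 1 ≤ M) (hMN : M ≤ N) (hm : 1 ≤ m) (hmM : m ≤ M)
    (b : ℝ) (hb : 0 < b) :
    Filter.limsup
      (fun ρ : ℝ =>
        Real.log
          (∫ x in {x : Fin M → ℝ | (∀ i, 0 < x i) ∧ Monotone x ∧
              ∀ k : Fin M, (k : ℕ) < m → x k ≤ b / ρ},
            wishartWeight N M x) / Real.log ρ)
      Filter.atTop ≤ -((m : ℝ) * ((N : ℝ) - (M : ℝ) + (m : ℝ))) := by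
  obtain ⟨C, hC⟩ := setIntegral_wishartWeight_le N M m hmM
  obtain ⟨D, hD0, K, hD⟩ := le_setIntegral_wishartWeight N M m hM
  have hev : ∀ᶠ ρ : ℝ in atTop, 1 < ρ ∧ 0 < b / ρ ∧ b / ρ ≤ 1 := by
    filter_upwards [eventually_gt_atTop 1, eventually_ge_atTop b] with ρ h1 h2
    have h0 : 0 < ρ := by linarith
    exact ⟨h1, by positivity, (div_le_one h0).2 h2⟩
  have hC0 : 0 < C := by
    have h1 := hC 1 one_pos
    have h2 := hD 1 one_pos le_rfl
    simp only [one_pow, mul_one] at h1 h2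
    linarith
  have hcast : -((m : ℝ) * ((N : ℝ) - (M : ℝ) + (m : ℝ))) = -((m * (N - M + m) : ℕ) : ℝ) := by
    push_cast [Nat.cast_sub hMN]
    ring
  have hU := tendsto_log_power_div_log hC0 hb (m * (N - M + m))
  have hL := tendsto_log_power_div_log hD0 hb K
  rw [hcast, ← hU.limsup_eq]
  refine limsup_le_limsup ?_ ?_ hU.isBoundedUnder_le
  · filter_upwards [hev] with ρ ⟨h1, h2, h3⟩
    have hlog := Real.log_pos h1
    have hpos : 0 < ∫ x in truncChamber M m (b / ρ), wishartWeight N M x :=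
      lt_of_lt_of_le (by positivity) (hD _ h2 h3)
    exact div_le_div_of_nonneg_right (Real.log_le_log hpos (hC _ h2)) hlog.le
  · -- Without a lower bound the real `limsup` could take its junk value `0`.
    refine IsBoundedUnder.isCoboundedUnder_le (hL.isBoundedUnder_ge.mono_ge ?_)
    filter_upwards [hev] with ρ ⟨h1, h2, h3⟩
    have hlog := Real.log_pos h1
    exact div_le_div_of_nonneg_right (Real.log_le_log (by positivity) (hD _ h2 h3)) hlog.le
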